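/- Consider an n-player game where each player i has action set X_i, a convex compact subset of R^d, and cost function f_i(x_i, x_{−i}) that is convex and lower semicontinuous in x_i for each fixed x_{−i}, and such that the family {f_i(x_i, ·) : x_i ∈ X_i} is uniformly equicontinuous in x_{−i}. Then the game admits a pure Nash equilibrium: a profile x* with f_i(x*_i, x*_{−i}) ≤ f_i(x_i, x*_{−i}) for all x_i ∈ X_i and all i. -/

import Mathlib

/-!
A profile `x` is a Nash equilibrium as soon as no `y` makes the Nikaidô–Isoda function
`Φ x y = ∑ i, (f i x - f i (x with y i in place of x i))` positive. This function vanishes on the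
diagonal and is concave in `y`. It is also lower semicontinuous in `x`: equicontinuity makes each
`f i` jointly lower semicontinuous and makes the cost of a fixed deviation continuous in `x`. Ky
Fan's minimax inequality therefore applies.

Ky Fan's inequality amounts to the Fan–Browder fixed point theorem for set-valued maps with convex
values and open fibres, which is the open-cover form of the KKM lemma on a simplex. That lemma
comes from a combinatorial parity argument due to Scarf: rank the points of a fine net of the
simplex by each of their coordinates, colour them by the covering sets, and count the incidences
between dominant sets and sets missing one prescribed colour. A dominant set carrying all colours
must exist, and fineness of the net makes it small.
-/

section Collision

open Finset

variable {α β : Type*}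

theorem image_erase_eq_image_iff [DecidableEq α] [DecidableEq β] {s : Finset α} {f : α → β}
    {y : α} (hy : y ∈ s) :
    (s.erase y).image f = s.image f ↔ ∃ z ∈ s, z ≠ y ∧ f z = f y := by
  refine ⟨fun h ↦ ?_, fun ⟨z, hz, hzy, hfz⟩ ↦ ?_⟩
  · obtain ⟨z, hz, hfz⟩ := mem_image.1 (h ▸ mem_image_of_mem f hy)
    exact ⟨z, mem_of_mem_erase hz, ne_of_mem_erase hz, hfz⟩
  · have hfy : f y ∈ (s.erase y).image f :=
      mem_image.2 ⟨z, mem_erase.2 ⟨hzy, hz⟩, hfz⟩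
    rw [← insert_eq_of_mem hfy, ← image_insert, insert_erase hy]

theorem exists_unique_collision [DecidableEq β] {s : Finset α} {f : α → β}
    (h : #(s.image f) + 1 = #s) :
    ∃ a ∈ s, ∃ b ∈ s, a ≠ b ∧ f a = f b ∧
      ∀ i ∈ s, ∀ j ∈ s, i ≠ j → f i = f j → s(i, j) = s(a, b) := by
  classical
  obtain ⟨a, ha, b, hb, hab, hfab⟩ :=
    exists_ne_map_eq_of_card_lt_of_maps_to (by lia : #(s.image f) < #s)
      fun x hx ↦ mem_image_of_mem f hx
  have himage : (s.erase a).image f = s.image f :=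
    (image_erase_eq_image_iff ha).2 ⟨b, hb, hab.symm, hfab.symm⟩
  have hinj : Set.InjOn f (s.erase a) := by
    apply injOn_of_card_image_eq
    rw [himage, card_erase_of_mem ha, ← h, Nat.add_sub_cancel]
  have eq_b {j : α} (hj : j ∈ s) (hja : j ≠ a) (hfj : f j = f a) : j = b :=
    hinj (mem_erase.2 ⟨hja, hj⟩) (mem_erase.2 ⟨hab.symm, hb⟩) (hfj.trans hfab)
  refine ⟨a, ha, b, hb, hab, hfab, fun i hi j hj hij hfij ↦ ?_⟩
  by_cases hia : i = a
  · subst hia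
    rw [eq_b hj hij.symm hfij.symm]
  · by_cases hja : j = a
    · subst hja
      rw [eq_b hi hij hfij, Sym2.eq_swap]
    · exact absurd (hinj (mem_erase.2 ⟨hia, hi⟩) (mem_erase.2 ⟨hja, hj⟩) hfij) hij

theorem exists_odd_card_bipartiteBelow {r : α → β → Prop} [∀ a b, Decidable (r a b)]
    {s : Finset α} {t : Finset β} {a₀ : α} (ha₀ : a₀ ∈ s)
    (hodd : Odd #(t.bipartiteAbove r a₀))
    (heven : ∀ a ∈ s, a ≠ a₀ → Even #(t.bipartiteAbove r a)) :
    ∃ b ∈ t, Odd #(s.bipartiteBelow r b) := by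
  classical
  have hsum : Odd (∑ a ∈ s, #(t.bipartiteAbove r a)) := by
    rw [← add_sum_erase _ _ ha₀]
    exact hodd.add_even (even_sum _ fun a ha ↦
      heven a (mem_of_mem_erase ha) (ne_of_mem_erase ha))
  rw [sum_card_bipartiteAbove_eq_sum_card_bipartiteBelow] at hsum
  by_contra! hcon
  exact Nat.not_even_iff_odd.2 hsum
    (even_sum _ fun b hb ↦ Nat.not_odd_iff_even.1 (hcon b hb))

end Collision

namespace Scarf

section Dominance

open Finset

variable {U I α : Type*} [LinearOrder α]

/-- A set `S` is dominant for the rankings `R i` if no `y` lies, in every ranking, strictly above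
the `R i`-least element of `S`. This is Scarf's notion of a primitive set. -/
def IsDominant (R : I → U → α) (S : Finset U) : Prop :=
  ∀ y, ∃ i, ∀ x ∈ S, R i y ≤ R i x

/-- `m i` is an `R i`-least element of `τ`, for every ranking `R i`. -/
structure IsLeastChoice (R : I → U → α) (τ : Finset U) (m : I → U) : Prop where
  mem : ∀ i, m i ∈ τ
  le : ∀ i, ∀ x ∈ τ, R i (m i) ≤ R i x

/-- The elements lying strictly above `m i` in every ranking `R i` with `i ≠ j`. -/
def upperRegion (R : I → U → α) (m : I → U) (j : I) : Set U :=
  {y | ∀ i, i ≠ j → R i (m i) < R i y}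

/-- `x` is an `R j`-greatest element of the region above `m` in the rankings other than `j`: the
elements that complete a dominant set of cardinality `#I - 1` to one of cardinality `#I` are of
this form. -/
def IsTopAbove (R : I → U → α) (m : I → U) (j : I) (x : U) : Prop :=
  x ∈ upperRegion R m j ∧ ∀ y ∈ upperRegion R m j, R j y ≤ R j x

variable {R : I → U → α} {τ : Finset U} {m : I → U}

theorem IsDominant.anti {S T : Finset U} (hT : IsDominant R T) (h : S ⊆ T) : IsDominant R S :=
  fun y ↦ (hT y).imp fun _ hi x hx ↦ hi x (h hx)

theorem exists_isLeastChoice (R : I → U → α) (hτ : τ.Nonempty) : ∃ m, IsLeastChoice R τ m := by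
  choose m hmem hle using fun i ↦ exists_min_image τ (R i) hτ
  exact ⟨m, hmem, hle⟩

theorem exists_isTopAbove [Finite U] {j : I} (h : (upperRegion R m j).Nonempty) :
    ∃ x, IsTopAbove R m j x :=
  Set.exists_max_image _ (R j) (Set.toFinite _) h

theorem IsTopAbove.unique (hR : ∀ i, (R i).Injective) {j : I} {x y : U}
    (hx : IsTopAbove R m j x) (hy : IsTopAbove R m j y) : x = y :=
  hR j (le_antisymm (hy.2 x hx.1) (hx.2 y hy.1))

namespace IsLeastChoice

variable (hm : IsLeastChoice R τ m)
include hm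

theorem eq_of_forall_le (hR : ∀ i, (R i).Injective) {i : I} {t : U} (ht : t ∈ τ)
    (h : ∀ x ∈ τ, R i t ≤ R i x) : m i = t :=
  hR i (le_antisymm (hm.le i t ht) (h _ (hm.mem i)))

theorem exists_eq_of_isDominant (hR : ∀ i, (R i).Injective) (hτ : IsDominant R τ) {t : U}
    (ht : t ∈ τ) : ∃ i, m i = t :=
  (hτ t).imp fun _ hi ↦ hm.eq_of_forall_le hR ht hi

theorem image_eq_of_isDominant [Fintype I] [DecidableEq U] (hR : ∀ i, (R i).Injective)
    (hτ : IsDominant R τ) : univ.image m = τ := by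
  ext t
  simp only [mem_image, mem_univ, true_and]
  exact ⟨fun ⟨i, hi⟩ ↦ hi ▸ hm.mem i, hm.exists_eq_of_isDominant hR hτ⟩

theorem index_eq_of_mem_upperRegion {i j : I} {y : U} (hy : y ∈ upperRegion R m j)
    (h : ∀ x ∈ τ, R i y ≤ R i x) : i = j := by
  by_contra hij
  exact (hy i hij).not_ge (h _ (hm.mem i))

theorem index_unique_of_mem_upperRegion (hτ : IsDominant R τ) {j k : I} {x : U}
    (hj : x ∈ upperRegion R m j) (hk : x ∈ upperRegion R m k) : j = k := by
  obtain ⟨i, hi⟩ := hτ x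
  exact (hm.index_eq_of_mem_upperRegion hj hi).symm.trans (hm.index_eq_of_mem_upperRegion hk hi)

theorem notMem_of_mem_upperRegion (hR : ∀ i, (R i).Injective) (hτ : IsDominant R τ) {j k : I}
    (hjk : j ≠ k) (hmjk : m j = m k) {x : U} (hx : x ∈ upperRegion R m j) : x ∉ τ := by
  intro hxτ
  obtain ⟨i, rfl⟩ := hm.exists_eq_of_isDominant hR hτ hxτ
  by_cases hij : i = j
  · subst hij
    exact (hx k hjk.symm).ne (congrArg (R k) hmjk.symm)
  · exact (hx i hij).false

theorem isDominant_insert_of_isTopAbove [DecidableEq U] (hτ : IsDominant R τ) {j : I} {x : U}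
    (hx : IsTopAbove R m j x) : IsDominant R (insert x τ) := by
  intro y
  simp only [forall_mem_insert]
  by_cases hy : y ∈ upperRegion R m j
  · obtain ⟨i, hi⟩ := hτ y
    obtain rfl := hm.index_eq_of_mem_upperRegion hy hi
    exact ⟨i, hx.2 y hy, hi⟩
  · simp only [upperRegion, Set.mem_ofPred_eq, not_forall, not_lt] at hy
    obtain ⟨i, hij, hi⟩ := hy
    exact ⟨i, hi.trans (hx.1 i hij).le, fun z hz ↦ hi.trans (hm.le i z hz)⟩

theorem isTopAbove_of_isDominant_insert [DecidableEq U] (hR : ∀ i, (R i).Injective) {a b : I}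
    (hab : ∀ i j, i ≠ j → m i = m j → s(i, j) = s(a, b)) {x : U} (hxτ : x ∉ τ)
    (hx : IsDominant R (insert x τ)) : IsTopAbove R m a x ∨ IsTopAbove R m b x := by
  obtain ⟨j, hj⟩ := hx x
  have hlt_j : R j x < R j (m j) :=
    (hj _ (mem_insert_of_mem (hm.mem j))).lt_of_ne fun h ↦ hxτ (hR j h ▸ hm.mem j)
  have exists_lt (i : I) : ∃ k, k ≠ j ∧ m k = m i ∧ R k (m k) < R k x := by
    obtain ⟨k, hk⟩ := hx (m i)
    have hmk : m k = m i :=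
      hm.eq_of_forall_le hR (hm.mem i) fun z hz ↦ hk z (mem_insert_of_mem hz)
    have hlt : R k (m k) < R k x := by
      rw [hmk]
      exact (hk x (mem_insert_self x τ)).lt_of_ne fun h ↦ hxτ (hR k h ▸ hm.mem i)
    exact ⟨k, fun hkj ↦ (hkj ▸ hlt).not_gt hlt_j, hmk, hlt⟩
  obtain ⟨k, hkj, hmk, -⟩ := exists_lt j
  have hpair : s(k, j) = s(a, b) := hab k j hkj hmk
  have hregion : x ∈ upperRegion R m j := by
    intro i hij
    obtain ⟨l, hlj, hml, hlt⟩ := exists_lt i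
    obtain rfl : l = i := by
      by_contra hli
      have hj_mem : j ∈ s(l, i) := hab l i hli hml ▸ hpair ▸ Sym2.mem_mk_right k j
      exact (Sym2.mem_iff.1 hj_mem).elim hlj.symm hij.symm
    exact hlt
  have htop : IsTopAbove R m j x := by
    refine ⟨hregion, fun y hy ↦ ?_⟩
    obtain ⟨i, hi⟩ := hx y
    obtain rfl := hm.index_eq_of_mem_upperRegion hy fun z hz ↦ hi z (mem_insert_of_mem hz)
    exact hi x (mem_insert_self x τ)
  rcases Sym2.mem_iff.1 (hpair ▸ Sym2.mem_mk_right k j : j ∈ s(a, b)) with rfl | rfl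
  · exact Or.inl htop
  · exact Or.inr htop

end IsLeastChoice

end Dominance

section Parity

open Finset

variable {U I α : Type*} [LinearOrder α] {R : I → U → α} {c : U → I} {s : I → U} {i₀ : I}

open scoped Classical in
/-- The rooms of the parity argument: dominant sets with as many elements as there are rankings. -/
noncomputable def rooms [Fintype U] [Fintype I] (R : I → U → α) : Finset (Finset U) :=
  {S | #S = Fintype.card I ∧ IsDominant R S}

/-- The doors of the parity argument: sets whose elements carry each colour other than `i₀`
exactly once. -/
def doors [Fintype U] [Fintype I] [DecidableEq I] (c : U → I) (i₀ : I) : Finset (Finset U) :=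
  {τ | #τ + 1 = Fintype.card I ∧ τ.image c = univ.erase i₀}

theorem mem_rooms [Fintype U] [Fintype I] {S : Finset U} :
    S ∈ rooms R ↔ #S = Fintype.card I ∧ IsDominant R S := by
  simp only [rooms, mem_filter, mem_univ, true_and]

theorem mem_doors [Fintype U] [Fintype I] [DecidableEq I] {τ : Finset U} :
    τ ∈ doors c i₀ ↔ #τ + 1 = Fintype.card I ∧ τ.image c = univ.erase i₀ := by
  simp only [doors, mem_filter, mem_univ, true_and]

theorem insert_mem_rooms_iff [Fintype U] [DecidableEq U] [Fintype I] {τ : Finset U}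
    (hτ : #τ + 1 = Fintype.card I) {x : U} (hx : x ∉ τ) :
    insert x τ ∈ rooms R ↔ IsDominant R (insert x τ) := by
  rw [mem_rooms, card_insert_of_notMem hx, hτ, eq_self, true_and]

-- A least choice `m` on `τ` repeats exactly one element, say `m a = m b`; the two completions of
-- `τ` to a dominant set add the top element of the region above `m` in direction `a` or `b`.
open scoped Classical in
theorem even_card_rooms_bipartiteAbove [Fintype U] [Fintype I] (hR : ∀ i, (R i).Injective)
    {τ : Finset U} (hτne : τ.Nonempty) (hτ : #τ + 1 = Fintype.card I)
    (hregion : ∀ m, IsLeastChoice R τ m → ∀ j, (upperRegion R m j).Nonempty) :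
    Even #((rooms R).bipartiteAbove (· ⋖ ·) τ) := by
  rcases ((rooms R).bipartiteAbove (· ⋖ ·) τ).eq_empty_or_nonempty with hempty | ⟨S, hS⟩
  · simp only [hempty, card_empty, Even.zero]
  obtain ⟨hSroom, hτS⟩ := (mem_bipartiteAbove _).1 hS
  have hdom : IsDominant R τ := (mem_rooms.1 hSroom).2.anti hτS.le
  obtain ⟨m, hm⟩ := exists_isLeastChoice R hτne
  obtain ⟨a, -, b, -, hab, hmab, huniq⟩ := exists_unique_collision (s := univ) (f := m)
    (by rw [hm.image_eq_of_isDominant hR hdom, hτ, card_univ])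
  obtain ⟨x, hx⟩ := exists_isTopAbove (hregion m hm a)
  obtain ⟨y, hy⟩ := exists_isTopAbove (hregion m hm b)
  have hxτ : x ∉ τ := hm.notMem_of_mem_upperRegion hR hdom hab hmab hx.1
  have hyτ : y ∉ τ := hm.notMem_of_mem_upperRegion hR hdom hab.symm hmab.symm hy.1
  have hxy : x ≠ y := fun h ↦ hab (hm.index_unique_of_mem_upperRegion hdom hx.1 (h ▸ hy.1))
  have hrooms : (rooms R).bipartiteAbove (· ⋖ ·) τ = {insert x τ, insert y τ} := by
    ext S
    simp only [mem_bipartiteAbove, covBy_iff_exists_insert, mem_insert, mem_singleton]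
    constructor
    · rintro ⟨hS, z, hzτ, rfl⟩
      have hz := (insert_mem_rooms_iff hτ hzτ).1 hS
      refine (hm.isTopAbove_of_isDominant_insert hR
        (fun i j ↦ huniq i (mem_univ i) j (mem_univ j)) hzτ hz).imp (fun h ↦ ?_) fun h ↦ ?_
      · rw [h.unique hR hx]
      · rw [h.unique hR hy]
    · rintro (rfl | rfl)
      · exact ⟨(insert_mem_rooms_iff hτ hxτ).2 (hm.isDominant_insert_of_isTopAbove hdom hx),
          x, hxτ, rfl⟩
      · exact ⟨(insert_mem_rooms_iff hτ hyτ).2 (hm.isDominant_insert_of_isTopAbove hdom hy),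
          y, hyτ, rfl⟩
  rw [hrooms, card_pair fun h ↦ hxy ((insert_inj hxτ).1 h)]
  exact even_two

theorem erase_mem_doors_iff [Fintype U] [DecidableEq U] [Fintype I] [DecidableEq I] {S : Finset U}
    (hS : #S = Fintype.card I) {x : U} (hx : x ∈ S) :
    S.erase x ∈ doors c i₀ ↔ (S.erase x).image c = univ.erase i₀ := by
  rw [mem_doors, card_erase_add_one hx, hS, eq_self, true_and]

open scoped Classical in
theorem even_card_doors_bipartiteBelow [Fintype U] [Fintype I] [DecidableEq I] {S : Finset U}
    (hS : #S = Fintype.card I) (hc : S.image c ≠ univ) :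
    Even #((doors c i₀).bipartiteBelow (· ⋖ ·) S) := by
  rcases ((doors c i₀).bipartiteBelow (· ⋖ ·) S).eq_empty_or_nonempty with hempty | ⟨τ, hτ⟩
  · simp only [hempty, card_empty, Even.zero]
  obtain ⟨hτdoor, hτS⟩ := (mem_bipartiteBelow _).1 hτ
  have himage : S.image c = univ.erase i₀ := by
    refine (eq_of_subset_of_card_le ?_ ?_).symm
    · exact (mem_doors.1 hτdoor).2 ▸ image_subset_image hτS.le
    · rw [card_erase_of_mem (mem_univ i₀)]
      exact Nat.le_sub_one_of_lt ((card_lt_iff_ne_univ _).2 hc)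
  obtain ⟨a, ha, b, hb, hab, hcab, huniq⟩ := exists_unique_collision (s := S) (f := c)
    (by rw [himage, card_erase_add_one (mem_univ i₀), card_univ, hS])
  have erase_mem {x y : U} (hx : x ∈ S) (hy : y ∈ S) (hxy : x ≠ y) (hcxy : c x = c y) :
      S.erase x ∈ doors c i₀ :=
    (erase_mem_doors_iff hS hx).2
      (himage ▸ (image_erase_eq_image_iff hx).2 ⟨y, hy, hxy.symm, hcxy.symm⟩)
  have hdoors : (doors c i₀).bipartiteBelow (· ⋖ ·) S = {S.erase a, S.erase b} := by
    ext τ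
    simp only [mem_bipartiteBelow, covBy_iff_exists_erase, mem_insert, mem_singleton]
    constructor
    · rintro ⟨hτ, x, hx, rfl⟩
      obtain ⟨y, hy, hyx, hcyx⟩ := (image_erase_eq_image_iff hx).1
        (((erase_mem_doors_iff hS hx).1 hτ).trans himage.symm)
      have hmem : x ∈ s(a, b) := huniq y hy x hx hyx hcyx ▸ Sym2.mem_mk_right y x
      exact (Sym2.mem_iff.1 hmem).imp (congrArg S.erase) (congrArg S.erase)
    · rintro (rfl | rfl)
      · exact ⟨erase_mem ha hb hab hcab, a, ha, rfl⟩
      · exact ⟨erase_mem hb ha hab.symm hcab.symm, b, hb, rfl⟩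
  rw [hdoors, card_pair fun h ↦ hab ((erase_inj S ha).1 h)]
  exact even_two

/-- `s` assigns to every ranking `R i` a slack element `s i`, which is least for `R i` and lies
above all elements that are not slack for every other ranking. -/
structure IsSlack (R : I → U → α) (s : I → U) : Prop where
  le : ∀ i u, R i (s i) ≤ R i u
  lt : ∀ i j, j ≠ i → ∀ u ∉ Set.range s, R i u < R i (s j)

/-- The door formed by all slack elements but `s i₀`, from which the parity argument starts. -/
def slackDoor [DecidableEq U] [Fintype I] [DecidableEq I] (s : I → U) (i₀ : I) : Finset U :=
  (univ.erase i₀).image s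

theorem mem_slackDoor [DecidableEq U] [Fintype I] [DecidableEq I] {u : U} :
    u ∈ slackDoor s i₀ ↔ ∃ i ≠ i₀, s i = u := by
  simp only [slackDoor, mem_image, mem_erase, mem_univ, and_true]

theorem slackDoor_mem_doors [Fintype U] [DecidableEq U] [Fintype I] [DecidableEq I]
    (hc : Function.LeftInverse c s) : slackDoor s i₀ ∈ doors c i₀ := by
  refine mem_doors.2 ⟨?_, ?_⟩
  · rw [slackDoor, card_image_of_injective _ hc.injective, card_erase_add_one (mem_univ i₀),
      card_univ]
  · rw [slackDoor, image_image, hc.comp_eq_id, image_id]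

theorem exists_notMem_range_of_mem_doors [Fintype U] [DecidableEq U] [Fintype I] [DecidableEq I]
    (hc : Function.LeftInverse c s) {τ : Finset U} (hτ : τ ∈ doors c i₀)
    (hne : τ ≠ slackDoor s i₀) : ∃ t ∈ τ, t ∉ Set.range s := by
  by_contra! hslack
  obtain ⟨hcard, himage⟩ := mem_doors.1 hτ
  have hsub : slackDoor s i₀ ⊆ τ := by
    intro u hu
    obtain ⟨k, hk, rfl⟩ := mem_slackDoor.1 hu
    obtain ⟨v, hv, hcv⟩ := mem_image.1 (himage ▸ mem_erase.2 ⟨hk, mem_univ k⟩)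
    obtain ⟨j, rfl⟩ := hslack v hv
    rwa [← hcv, hc j]
  refine hne (eq_of_subset_of_card_le hsub ?_).symm
  have hcard_slack := (mem_doors.1 (slackDoor_mem_doors (i₀ := i₀) hc)).1
  lia

namespace IsSlack

variable (hs : IsSlack R s)
include hs

theorem lt_of_notMem_range (hR : ∀ i, (R i).Injective) {t : U} (ht : t ∉ Set.range s) (i : I) :
    R i (s i) < R i t :=
  (hs.le i t).lt_of_ne fun h ↦ ht ⟨i, hR i h⟩

theorem upperRegion_nonempty {τ : Finset U} {m : I → U} (hm : IsLeastChoice R τ m) {t : U}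
    (ht : t ∈ τ) (ht_slack : t ∉ Set.range s) (j : I) : (upperRegion R m j).Nonempty :=
  ⟨s j, fun i hij ↦ (hm.le i t ht).trans_lt (hs.lt i j hij.symm t ht_slack)⟩

theorem isDominant_insert_slackDoor [DecidableEq U] [Fintype I] [DecidableEq I] {t : U}
    (hmax : ∀ u ∉ Set.range s, R i₀ u ≤ R i₀ t) :
    IsDominant R (insert t (slackDoor s i₀)) := by
  intro y
  by_cases hy : y ∈ Set.range s
  · obtain ⟨j, rfl⟩ := hy
    exact ⟨j, fun x _ ↦ hs.le j x⟩
  · refine ⟨i₀, forall_mem_insert _ _ _ |>.2 ⟨hmax y hy, fun x hx ↦ ?_⟩⟩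
    obtain ⟨k, hk, rfl⟩ := mem_slackDoor.1 hx
    exact (hs.lt i₀ k hk y hy).le

theorem eq_of_isDominant_insert_slackDoor [DecidableEq U] [Fintype I] [DecidableEq I]
    (hR : ∀ i, (R i).Injective) {t : U} (ht : t ∉ Set.range s)
    (hmax : ∀ u ∉ Set.range s, R i₀ u ≤ R i₀ t) {x : U} (hx : x ∉ slackDoor s i₀)
    (hdom : IsDominant R (insert x (slackDoor s i₀))) : x = t := by
  obtain ⟨i, hi⟩ := hdom t
  obtain rfl : i = i₀ := by
    by_contra hne
    exact (hs.lt_of_notMem_range hR ht i).not_ge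
      (hi _ (mem_insert_of_mem (mem_slackDoor.2 ⟨i, hne, rfl⟩)))
  have hle : R i t ≤ R i x := hi x (mem_insert_self _ _)
  have hx_slack : x ∉ Set.range s := by
    rintro ⟨j, rfl⟩
    obtain rfl : j = i := by
      by_contra hne
      exact hx (mem_slackDoor.2 ⟨j, hne, rfl⟩)
    exact (hs.lt_of_notMem_range hR ht j).not_ge hle
  exact hR i (le_antisymm (hmax x hx_slack) hle)

open scoped Classical in
theorem odd_card_rooms_bipartiteAbove_slackDoor [Fintype U] [DecidableEq U] [Fintype I]
    [DecidableEq I] (hR : ∀ i, (R i).Injective) (hc : Function.LeftInverse c s)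
    (hne : (Set.range s)ᶜ.Nonempty) : Odd #((rooms R).bipartiteAbove (· ⋖ ·) (slackDoor s i₀)) := by
  obtain ⟨t, ht, hmax⟩ := Set.exists_max_image _ (R i₀) (Set.toFinite (Set.range s)ᶜ) hne
  have hcard := (mem_doors.1 (slackDoor_mem_doors (i₀ := i₀) hc)).1
  have ht_door : t ∉ slackDoor s i₀ := fun h ↦ by
    obtain ⟨i, -, hi⟩ := mem_slackDoor.1 h
    exact ht ⟨i, hi⟩
  have hrooms : (rooms R).bipartiteAbove (· ⋖ ·) (slackDoor s i₀) =
      {insert t (slackDoor s i₀)} := by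
    ext S
    simp only [mem_bipartiteAbove, covBy_iff_exists_insert, mem_singleton]
    constructor
    · rintro ⟨hS, x, hx, rfl⟩
      rw [hs.eq_of_isDominant_insert_slackDoor hR ht hmax hx
        ((insert_mem_rooms_iff hcard hx).1 hS)]
    · rintro rfl
      exact ⟨(insert_mem_rooms_iff hcard ht_door).2 (hs.isDominant_insert_slackDoor hmax),
        t, ht_door, rfl⟩
  rw [hrooms, card_singleton]
  exact odd_one

theorem exists_isDominant_image_eq_univ [Finite U] [Fintype I] [DecidableEq I]
    (hR : ∀ i, (R i).Injective) (hc : Function.LeftInverse c s) (hne : (Set.range s)ᶜ.Nonempty) :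
    ∃ S : Finset U, S.image c = univ ∧ IsDominant R S := by
  classical
  cases nonempty_fintype U
  let i₀ : I := c hne.some
  have heven : ∀ τ ∈ doors c i₀, τ ≠ slackDoor s i₀ →
      Even #((rooms R).bipartiteAbove (· ⋖ ·) τ) := by
    intro τ hτ hτne
    obtain ⟨t, ht, ht_slack⟩ := exists_notMem_range_of_mem_doors hc hτ hτne
    exact even_card_rooms_bipartiteAbove hR ⟨t, ht⟩ (mem_doors.1 hτ).1
      fun m hm ↦ hs.upperRegion_nonempty hm ht ht_slack
  obtain ⟨S, hS, hodd⟩ := exists_odd_card_bipartiteBelow (slackDoor_mem_doors hc)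
    (hs.odd_card_rooms_bipartiteAbove_slackDoor hR hc hne) heven
  obtain ⟨hcard, hdom⟩ := mem_rooms.1 hS
  refine ⟨S, ?_, hdom⟩
  by_contra himage
  exact Nat.not_even_iff_odd.2 hodd (even_card_doors_bipartiteBelow hcard himage)

end IsSlack

end Parity

section Colouring

open Finset

variable {T I α : Type*} [LinearOrder α]

/-- The rankings `r` extended to slack elements: `Sum.inr j` lies below everything for `j = i`, and
above everything otherwise. -/
def slackLevel [DecidableEq I] (r : I → T → α) (i : I) : T ⊕ I → WithBot (WithTop α)
  | .inl t => ((r i t : WithTop α) : WithBot (WithTop α))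
  | .inr j => if j = i then ⊥ else ((⊤ : WithTop α) : WithBot (WithTop α))

theorem isSlack_slackLevel [DecidableEq I] (r : I → T → α) {β : Type*} [LinearOrder β]
    (e : T ⊕ I → β) :
    IsSlack (fun i u ↦ toLex (slackLevel r i u, e u)) Sum.inr where
  le i u := by
    rcases u with t | j
    · simp [Prod.Lex.toLex_le_toLex, slackLevel]
    · by_cases hji : j = i
      · simp [hji]
      · simp [Prod.Lex.toLex_le_toLex, slackLevel, hji]
  lt i j hji u hu := by
    rcases u with t | k
    · refine Prod.Lex.toLex_lt_toLex.2 (Or.inl ?_)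
      simpa only [slackLevel, if_neg hji] using WithBot.coe_lt_coe.2 (WithTop.coe_lt_top (r i t))
    · exact absurd ⟨k, rfl⟩ hu

theorem exists_finset_forall_exists_colour [Finite T] [Nonempty T] [Finite I] (r : I → T → α)
    (c : T → I) : ∃ σ : Finset T, ∀ y, ∃ z ∈ σ, ∀ x ∈ σ, r (c z) y ≤ r (c z) x := by
  classical
  cases nonempty_fintype T
  cases nonempty_fintype I
  -- The enumeration `e` breaks ties, so that the lexicographic rankings are injective.
  let e := Fintype.equivFin (T ⊕ I)
  let R : I → T ⊕ I → WithBot (WithTop α) ×ₗ Fin (Fintype.card (T ⊕ I)) :=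
    fun i u ↦ toLex (slackLevel r i u, e u)
  have hR (i : I) : (R i).Injective := fun u v h ↦
    e.injective (congrArg Prod.snd (toLex.injective h))
  have hs : IsSlack R Sum.inr := isSlack_slackLevel r e
  have hinl (t : T) : Sum.inl t ∉ Set.range (Sum.inr : I → T ⊕ I) := by simp
  obtain ⟨S, himage, hdom⟩ := hs.exists_isDominant_image_eq_univ (c := Sum.elim c id) hR
    (fun _ ↦ rfl) ⟨_, hinl (Classical.arbitrary T)⟩
  refine ⟨S.toLeft, fun y ↦ ?_⟩
  obtain ⟨i, hi⟩ := hdom (Sum.inl y)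
  obtain ⟨z | j, hz, rfl⟩ := mem_image.1 (himage ▸ mem_univ i)
  · refine ⟨z, mem_toLeft.2 hz, fun x hx ↦ ?_⟩
    have hlevel := Prod.Lex.monotone_fst _ _ (hi _ (mem_toLeft.1 hx))
    exact WithTop.coe_le_coe.1 (WithBot.coe_le_coe.1 hlevel)
  · exact absurd (hi _ hz) (hs.lt_of_notMem_range hR (hinl y) j).not_ge

end Colouring

end Scarf

section KKM

open Finset Metric

variable {I : Type*} [Fintype I]

theorem exists_forall_lt_of_stdSimplex_subset_iUnion_ball [Nonempty I] {t : Set (I → ℝ)}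
    {η : ℝ} (ht : stdSimplex ℝ I ⊆ ⋃ x ∈ t, ball x η) (hη : 0 < η) {m : I → ℝ} (hm : ∀ i, 0 ≤ m i)
    (hsum : ∑ i, m i + Fintype.card I * η ≤ 1) : ∃ x ∈ t, ∀ i, m i < x i := by
  have hcard : (0 : ℝ) < Fintype.card I := Nat.cast_pos.2 Fintype.card_pos
  let y : I → ℝ := fun i ↦ m i + (1 - ∑ j, m j) / Fintype.card I
  have hη_le : η ≤ (1 - ∑ j, m j) / Fintype.card I := by
    rw [le_div_iff₀ hcard]
    linarith
  have hy : y ∈ stdSimplex ℝ I := by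
    refine ⟨fun i ↦ add_nonneg (hm i) (hη.le.trans hη_le), ?_⟩
    simp only [y, sum_add_distrib, sum_const, card_univ, nsmul_eq_mul]
    rw [mul_div_cancel₀ _ hcard.ne', add_sub_cancel]
  obtain ⟨x, hx, hyx⟩ := Set.mem_iUnion₂.1 (ht hy)
  refine ⟨x, hx, fun i ↦ ?_⟩
  have hi : y i - x i < η :=
    (le_abs_self _).trans_lt ((dist_pi_lt_iff hη).1 (mem_ball.1 hyx) i)
  simp only [y] at hi
  linarith

theorem dist_lt_of_forall_le_of_sum_sub_sum_lt {x w m : I → ℝ} {ε : ℝ} (hmx : ∀ i, m i ≤ x i)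
    (hmw : ∀ i, m i ≤ w i) (hx : ∑ i, x i - ∑ i, m i < ε) (hw : ∑ i, w i - ∑ i, m i < ε) :
    dist w x < ε := by
  have sub_le {v : I → ℝ} (hv : ∀ i, m i ≤ v i) (i : I) : v i - m i ≤ ∑ j, v j - ∑ j, m j := by
    rw [← sum_sub_distrib]
    exact single_le_sum (fun j _ ↦ sub_nonneg.2 (hv j)) (mem_univ i)
  have hε : 0 < ε := (sub_nonneg.2 (sum_le_sum fun i _ ↦ hmx i)).trans_lt hx
  refine (dist_pi_lt_iff hε).2 fun i ↦ ?_
  rw [Real.dist_eq, abs_sub_lt_iff]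
  constructor
  · linarith [sub_le hmw i, hmx i]
  · linarith [sub_le hmx i, hmw i]

theorem exists_finset_subset_stdSimplex_one_sub_sum_lt [Nonempty I] (c : (I → ℝ) → I) {ε : ℝ}
    (hε : 0 < ε) : ∃ σ : Finset (I → ℝ), σ.Nonempty ∧ (∀ x ∈ σ, x ∈ stdSimplex ℝ I) ∧
      ∀ m : I → ℝ, (∀ i, 0 ≤ m i) → (∀ z ∈ σ, ∃ x ∈ σ, x (c z) ≤ m (c z)) → 1 - ∑ i, m i < ε := by
  have hcard : (0 : ℝ) < Fintype.card I := Nat.cast_pos.2 Fintype.card_pos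
  obtain ⟨t, ht_sub, ht_fin, ht_cover⟩ :=
    (isCompact_stdSimplex ℝ I).finite_cover_balls (div_pos hε hcard)
  have : Finite t := ht_fin
  have : Nonempty t := by
    classical
    obtain ⟨x, hx, -⟩ := Set.mem_iUnion₂.1
      (ht_cover (single_mem_stdSimplex ℝ (Classical.arbitrary I)))
    exact ⟨x, hx⟩
  obtain ⟨σ, hσ⟩ := Scarf.exists_finset_forall_exists_colour (fun i (x : t) ↦ x.1 i)
    (fun x ↦ c x)
  have hσ_ne : σ.Nonempty := (hσ (Classical.arbitrary t)).imp fun _ h ↦ h.1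
  refine ⟨σ.map (.subtype _), hσ_ne.map, forall_mem_map.2 fun x _ ↦ ht_sub x.2,
    fun m hm hmσ ↦ ?_⟩
  by_contra! hle
  obtain ⟨y, hy, hmy⟩ := exists_forall_lt_of_stdSimplex_subset_iUnion_ball ht_cover
    (div_pos hε hcard) hm (by rw [mul_div_cancel₀ _ hcard.ne']; linarith)
  obtain ⟨z, hz, hyz⟩ := hσ ⟨y, hy⟩
  obtain ⟨_, hxσ, hxm⟩ := hmσ z (mem_map_of_mem _ hz)
  obtain ⟨x, hx, rfl⟩ := mem_map.1 hxσ
  exact ((hmy (c z)).trans_le (hyz x hx)).not_ge hxm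

theorem exists_mem_stdSimplex_forall_dist_lt [Nonempty I] (c : (I → ℝ) → I) {ε : ℝ} (hε : 0 < ε) :
    ∃ z ∈ stdSimplex ℝ I, ∀ i, z i ≠ 0 → ∃ x ∈ stdSimplex ℝ I, c x = i ∧ dist z x < ε := by
  classical
  obtain ⟨σ, hσ_ne, hσ, hσ_sum⟩ := exists_finset_subset_stdSimplex_one_sub_sum_lt c hε
  let m : I → ℝ := fun i ↦ if ∃ z ∈ σ, c z = i then σ.inf' hσ_ne (fun x ↦ x i) else 0
  have hm_nonneg (i : I) : 0 ≤ m i := by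
    simp only [m]
    split_ifs
    · exact le_inf' _ _ fun x hx ↦ (hσ x hx).1 i
    · exact le_rfl
  have hm_le {x : I → ℝ} (hx : x ∈ σ) (i : I) : m i ≤ x i := by
    simp only [m]
    split_ifs
    · exact inf'_le _ hx
    · exact (hσ x hx).1 i
  have hm_sum : 1 - ∑ i, m i < ε := hσ_sum m hm_nonneg fun z hz ↦ by
    obtain ⟨x, hx, hxz⟩ := exists_mem_eq_inf' hσ_ne fun x ↦ x (c z)
    simp only [m, if_pos (⟨z, hz, rfl⟩ : ∃ z' ∈ σ, c z' = c z)]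
    exact ⟨x, hx, hxz.ge⟩
  obtain ⟨z₀, hz₀⟩ := hσ_ne
  let w : I → ℝ := m + Pi.single (c z₀) (1 - ∑ i, m i)
  have hm_sum_le : ∑ i, m i ≤ 1 := (sum_le_sum fun i _ ↦ hm_le hz₀ i).trans_eq (hσ z₀ hz₀).2
  have hmw : m ≤ w := le_add_of_nonneg_right (Pi.single_nonneg.2 (sub_nonneg.2 hm_sum_le))
  have hw_sum : ∑ i, w i = 1 := by
    simp only [w, Pi.add_apply, sum_add_distrib, sum_pi_single', mem_univ, if_true,
      add_sub_cancel]
  refine ⟨w, ⟨fun i ↦ (hm_nonneg i).trans (hmw i), hw_sum⟩, fun i hi ↦ ?_⟩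
  obtain ⟨z, hz, rfl⟩ : ∃ z ∈ σ, c z = i := by
    by_contra hcolour
    have hi_ne : i ≠ c z₀ := fun h ↦ hcolour ⟨z₀, hz₀, h.symm⟩
    exact hi (by simp only [w, m, Pi.add_apply, if_neg hcolour, Pi.single_eq_of_ne hi_ne, add_zero])
  refine ⟨z, hσ z hz, rfl, dist_lt_of_forall_le_of_sum_sub_sum_lt (hm_le hz) hmw ?_ ?_⟩
  · rwa [(hσ z hz).2]
  · rwa [hw_sum]

theorem exists_mem_stdSimplex_forall_mem_of_isOpen [Nonempty I] {U : I → Set (I → ℝ)}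
    (hU : ∀ i, IsOpen (U i)) (hcover : stdSimplex ℝ I ⊆ ⋃ i, U i) :
    ∃ z ∈ stdSimplex ℝ I, ∀ i, z i ≠ 0 → z ∈ U i := by
  obtain ⟨δ, hδ, hball⟩ := lebesgue_number_lemma_of_metric (isCompact_stdSimplex ℝ I) hU hcover
  have hchoice (x : I → ℝ) : ∃ i, x ∈ stdSimplex ℝ I → ball x δ ⊆ U i := by
    by_cases hx : x ∈ stdSimplex ℝ I
    · exact (hball x hx).imp fun _ h _ ↦ h
    · exact ⟨Classical.arbitrary I, fun h ↦ absurd h hx⟩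
  choose c hc using hchoice
  obtain ⟨z, hz, hzc⟩ := exists_mem_stdSimplex_forall_dist_lt c hδ
  refine ⟨z, hz, fun i hi ↦ ?_⟩
  obtain ⟨x, hx, rfl, hzx⟩ := hzc i hi
  exact hc x hx (mem_ball.2 hzx)

end KKM

section FanBrowder

open Set

variable {E : Type*} [AddCommGroup E] [Module ℝ E] [TopologicalSpace E] [ContinuousAdd E]
  [ContinuousSMul ℝ E]

theorem exists_mem_of_isOpen_fibers {K : Set E} (hKcomp : IsCompact K) (hKconv : Convex ℝ K)
    (hKne : K.Nonempty) {A : E → Set E} (hconv : ∀ x ∈ K, Convex ℝ (A x))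
    (hne : ∀ x ∈ K, (A x ∩ K).Nonempty)
    (hopen : ∀ y ∈ K, ∃ O, IsOpen O ∧ K ∩ {x | y ∈ A x} = K ∩ O) : ∃ x ∈ K, x ∈ A x := by
  choose! O hO hKO using hopen
  have hcover : K ⊆ ⋃ y : K, O y := by
    intro x hx
    obtain ⟨y, hyA, hyK⟩ := hne x hx
    have hxO : x ∈ K ∩ O y := hKO y hyK ▸ ⟨hx, hyA⟩
    exact mem_iUnion.2 ⟨⟨y, hyK⟩, hxO.2⟩
  obtain ⟨t, ht⟩ := hKcomp.elim_finite_subcover (fun y : K ↦ O y) (fun y ↦ hO y y.2) hcover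
  have : Nonempty t := by
    obtain ⟨x, hx⟩ := hKne
    obtain ⟨y, hy, -⟩ := mem_iUnion₂.1 (ht hx)
    exact ⟨y, hy⟩
  let φ : (t → ℝ) → E := fun z ↦ ∑ y, z y • (y : E)
  have hφ : Continuous φ := by fun_prop
  have hφK {z : t → ℝ} (hz : z ∈ stdSimplex ℝ t) : φ z ∈ K :=
    hKconv.sum_mem (fun y _ ↦ hz.1 y) hz.2 fun y _ ↦ y.1.2
  obtain ⟨z, hz, hzO⟩ := exists_mem_stdSimplex_forall_mem_of_isOpen
    (U := fun y : t ↦ φ ⁻¹' O y) (fun y ↦ (hO y y.1.2).preimage hφ) (by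
      intro z hz
      obtain ⟨y, hy, hyO⟩ := mem_iUnion₂.1 (ht (hφK hz))
      exact mem_iUnion.2 ⟨⟨y, hy⟩, hyO⟩)
  have hmem (y : t) (hy : z y ≠ 0) : (y : E) ∈ A (φ z) := by
    have hφz : φ z ∈ K ∩ {x | (y : E) ∈ A x} := hKO y y.1.2 ▸ ⟨hφK hz, hzO y hy⟩
    exact hφz.2
  refine ⟨φ z, hφK hz, ?_⟩
  have hsupport : φ z = ∑ y with z y ≠ 0, z y • (y : E) :=
    (Finset.sum_filter_of_ne fun y _ hne ↦ left_ne_zero_of_smul hne).symm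
  have hsum_mem : ∑ y with z y ≠ 0, z y • (y : E) ∈ A (φ z) := by
    refine (hconv _ (hφK hz)).sum_mem (fun y _ ↦ hz.1 y) ?_ fun y hy ↦
      hmem y (Finset.mem_filter.1 hy).2
    rw [Finset.sum_filter_ne_zero, hz.2]
  rwa [← hsupport] at hsum_mem

theorem exists_forall_le_of_quasiconcaveOn {β : Type*} [LinearOrder β] {K : Set E}
    (hKcomp : IsCompact K) (hKconv : Convex ℝ K) (hKne : K.Nonempty) {Φ : E → E → β} {b : β}
    (hquasi : ∀ x ∈ K, QuasiconcaveOn ℝ K (Φ x))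
    (hlsc : ∀ y ∈ K, LowerSemicontinuousOn (fun x ↦ Φ x y) K) (hdiag : ∀ x ∈ K, Φ x x ≤ b) :
    ∃ x ∈ K, ∀ y ∈ K, Φ x y ≤ b := by
  by_contra! hcon
  obtain ⟨x, hx, -, hlt⟩ := exists_mem_of_isOpen_fibers hKcomp hKconv hKne
    (A := fun x ↦ {y | y ∈ K ∧ b < Φ x y}) (fun x hx ↦ (hquasi x hx).convex_gt b)
    (fun x hx ↦ (hcon x hx).imp fun y hy ↦ ⟨hy, hy.1⟩) fun y hy ↦ by
      obtain ⟨O, hO, hKO⟩ := lowerSemicontinuousOn_iff_preimage_Ioi.1 (hlsc y hy) b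
      refine ⟨O, hO, hKO ▸ ?_⟩
      ext x
      exact and_congr_right fun _ ↦ and_iff_right hy
  exact (hdiag x hx).not_gt hlt

end FanBrowder

section Semicontinuity

open Set Function
open scoped Topology

theorem lowerSemicontinuousOn_prod_of_equicontinuousOn {A B : Type*} [TopologicalSpace A]
    [TopologicalSpace B] {F : A → B → ℝ} {s : Set A} {t : Set B}
    (hequi : EquicontinuousOn (fun a : s ↦ F a) t)
    (hlsc : ∀ b ∈ t, LowerSemicontinuousOn (fun a ↦ F a b) s) :
    LowerSemicontinuousOn (fun p : A × B ↦ F p.1 p.2) (s ×ˢ t) := by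
  rintro ⟨a₀, b₀⟩ ⟨ha₀, hb₀⟩ r hr
  obtain ⟨q, hrq, hq⟩ := exists_between hr
  have hfst : ∀ᶠ a in 𝓝[s] a₀, q < F a b₀ := hlsc b₀ hb₀ a₀ ha₀ q hq
  have hsnd : ∀ᶠ b in 𝓝[t] b₀, ∀ a : s, dist (F a b₀) (F a b) < q - r :=
    Metric.uniformity_basis_dist.equicontinuousWithinAt_iff_right.1 (hequi b₀ hb₀) _
      (sub_pos.2 hrq)
  filter_upwards [nhdsWithin_prod_eq a₀ b₀ s t ▸ hfst.prod_mk hsnd, self_mem_nhdsWithin]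
    with p ⟨hq, hdist⟩ hp
  have hsub := (abs_sub_lt_iff.1 (hdist ⟨p.1, hp.1⟩)).1
  change r < F p.1 p.2
  linarith

theorem lowerSemicontinuousOn_of_equicontinuousOn_update {ι : Type*} [DecidableEq ι]
    {E : ι → Type*} [∀ i, TopologicalSpace (E i)] {X : ∀ i, Set (E i)} {i : ι}
    {g : (∀ i, E i) → ℝ}
    (hequi : EquicontinuousOn (fun (y : X i) x ↦ g (update x i y)) (univ.pi X))
    (hlsc : ∀ x ∈ univ.pi X, LowerSemicontinuousOn (fun y ↦ g (update x i y)) (X i)) :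
    LowerSemicontinuousOn g (univ.pi X) := by
  have hgraph : ContinuousOn (fun x : ∀ j, E j ↦ (x i, x)) (univ.pi X) := by fun_prop
  have hcomp := (lowerSemicontinuousOn_prod_of_equicontinuousOn
    (F := fun y x ↦ g (update x i y)) hequi hlsc).comp
    hgraph fun x hx ↦ ⟨hx i (mem_univ i), hx⟩
  simpa only [comp_def, update_eq_self] using hcomp

theorem equicontinuousOn_update_of_forall_sqrt_le {ι : Type*} [Fintype ι] [DecidableEq ι]
    {E : ι → Type*} [∀ i, SeminormedAddCommGroup (E i)] {X : ∀ i, Set (E i)} {i : ι}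
    {g : (∀ i, E i) → ℝ}
    (h : ∀ ε > (0 : ℝ), ∃ δ > (0 : ℝ), ∀ x x' : ∀ i, E i, (∀ j, x j ∈ X j) → (∀ j, x' j ∈ X j) →
      x i = x' i → √(∑ j, ‖x j - x' j‖ ^ 2) ≤ δ → |g x - g x'| ≤ ε) :
    EquicontinuousOn (fun (y : X i) x ↦ g (update x i y)) (univ.pi X) := by
  intro x₀ hx₀
  rw [Metric.uniformity_basis_dist_le.equicontinuousWithinAt_iff_right]
  intro ε hε
  obtain ⟨δ, hδ, hg⟩ := h ε hε
  have hcont : Continuous fun x : ∀ i, E i ↦ √(∑ j, ‖x₀ j - x j‖ ^ 2) := by fun_prop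
  have hnear : ∀ᶠ x in nhds x₀, √(∑ j, ‖x₀ j - x j‖ ^ 2) < δ :=
    hcont.continuousAt.eventually_lt continuousAt_const (by simpa using hδ)
  have update_mem {x : ∀ i, E i} (hx : x ∈ univ.pi X) (y : X i) (j : ι) :
      update x i (y : E i) j ∈ X j :=
    (update_mem_pi_iff_of_mem hx).2 (fun _ ↦ y.2) j (mem_univ j)
  filter_upwards [mem_nhdsWithin_of_mem_nhds hnear, self_mem_nhdsWithin] with x hxδ hx y
  refine hg _ _ (update_mem hx₀ y) (update_mem hx y) (by simp only [update_self]) ?_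
  refine (Real.sqrt_le_sqrt (Finset.sum_le_sum fun j _ ↦ ?_)).trans hxδ.le
  by_cases hj : j = i
  · subst hj
    simp only [update_self, sub_self, norm_zero, zero_pow two_ne_zero]
    positivity
  · simp only [update_of_ne hj, le_refl]

end Semicontinuity

section Game

open Set Function

variable {ι : Type*} [DecidableEq ι] {E : ι → Type*} {X : ∀ i, Set (E i)}
  {f : ι → (∀ i, E i) → ℝ}

/-- The Nikaidô–Isoda function of a game with costs `f`: the total gain of the players when each
of them separately deviates from the profile `x` to the action prescribed by `y`. -/
def nikaidoIsoda [Fintype ι] (f : ι → (∀ i, E i) → ℝ) (x y : ∀ i, E i) : ℝ :=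
  ∑ i, (f i x - f i (update x i (y i)))

theorem nikaidoIsoda_self [Fintype ι] (x : ∀ i, E i) : nikaidoIsoda f x x = 0 := by
  simp only [nikaidoIsoda, update_eq_self, sub_self, Finset.sum_const_zero]

theorem nikaidoIsoda_update [Fintype ι] (x : ∀ i, E i) (i : ι) (y : E i) :
    nikaidoIsoda f x (update x i y) = f i x - f i (update x i y) := by
  rw [nikaidoIsoda, Finset.sum_eq_single i]
  · rw [update_self]
  · intro j _ hji
    rw [update_of_ne hji, update_eq_self, sub_self]
  · exact fun hi ↦ absurd (Finset.mem_univ i) hi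

theorem concaveOn_nikaidoIsoda [Fintype ι] [∀ i, AddCommGroup (E i)] [∀ i, Module ℝ (E i)]
    {x : ∀ i, E i} (hconv : ∀ i, ConvexOn ℝ (X i) fun y ↦ f i (update x i y)) :
    ConcaveOn ℝ (univ.pi X) (nikaidoIsoda f x) := by
  have hpi : Convex ℝ (univ.pi X) := convex_pi fun i _ ↦ (hconv i).1
  have hterm (i : ι) : ConcaveOn ℝ (univ.pi X) fun y ↦ f i x - f i (update x i (y i)) :=
    (concaveOn_const _ hpi).sub (((hconv i).comp_linearMap (LinearMap.proj i)).subset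
      (fun y hy ↦ hy i (mem_univ i)) hpi)
  have hsum : nikaidoIsoda f x = ∑ i, fun y ↦ f i x - f i (update x i (y i)) := by
    ext y
    rw [Finset.sum_apply, nikaidoIsoda]
  rw [hsum]
  exact Finset.sum_induction _ (ConcaveOn ℝ (univ.pi X)) (fun _ _ ↦ .add) (concaveOn_const 0 hpi)
    fun i _ ↦ hterm i

variable [∀ i, TopologicalSpace (E i)]

theorem lowerSemicontinuousOn_nikaidoIsoda [Fintype ι]
    (hsum : LowerSemicontinuousOn (fun x ↦ ∑ i, f i x) (univ.pi X)) {y : ∀ i, E i}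
    (husc : ∀ i, UpperSemicontinuousOn (fun x ↦ f i (update x i (y i))) (univ.pi X)) :
    LowerSemicontinuousOn (fun x ↦ nikaidoIsoda f x y) (univ.pi X) := by
  simp only [nikaidoIsoda, Finset.sum_sub_distrib]
  simp only [sub_eq_add_neg, ← Finset.sum_neg_distrib]
  exact hsum.add (lowerSemicontinuousOn_sum fun i _ ↦ (husc i).neg)

theorem exists_nash_of_lowerSemicontinuousOn_sum [Fintype ι] [∀ i, AddCommGroup (E i)]
    [∀ i, Module ℝ (E i)] [∀ i, ContinuousAdd (E i)] [∀ i, ContinuousSMul ℝ (E i)]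
    (hXne : ∀ i, (X i).Nonempty) (hXcomp : ∀ i, IsCompact (X i))
    (hconv : ∀ i, ∀ x ∈ univ.pi X, ConvexOn ℝ (X i) fun y ↦ f i (update x i y))
    (hsum : LowerSemicontinuousOn (fun x ↦ ∑ i, f i x) (univ.pi X))
    (husc : ∀ i, ∀ y ∈ X i, UpperSemicontinuousOn (fun x ↦ f i (update x i y)) (univ.pi X)) :
    ∃ x ∈ univ.pi X, ∀ i, ∀ y ∈ X i, f i x ≤ f i (update x i y) := by
  have hne : (univ.pi X).Nonempty := univ_pi_nonempty_iff.2 hXne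
  have hconcave : ∀ x ∈ univ.pi X, ConcaveOn ℝ (univ.pi X) (nikaidoIsoda f x) :=
    fun x hx ↦ concaveOn_nikaidoIsoda fun i ↦ hconv i x hx
  obtain ⟨x, hx, hmin⟩ := exists_forall_le_of_quasiconcaveOn (isCompact_univ_pi hXcomp)
    (hconcave _ hne.some_mem).1 hne (Φ := nikaidoIsoda f) (b := 0)
    (fun x hx ↦ (hconcave x hx).quasiconcaveOn)
    (fun y hy ↦ lowerSemicontinuousOn_nikaidoIsoda hsum fun i ↦
      husc i (y i) (hy i (mem_univ i)))
    (fun x _ ↦ (nikaidoIsoda_self x).le)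
  refine ⟨x, hx, fun i y hy ↦ sub_nonpos.1 ?_⟩
  rw [← nikaidoIsoda_update]
  exact hmin _ ((update_mem_pi_iff_of_mem hx).2 fun _ ↦ hy)

theorem lsc_convex_game_PNE_general [Finite ι] [∀ i, AddCommGroup (E i)]
    [∀ i, Module ℝ (E i)] [∀ i, ContinuousAdd (E i)] [∀ i, ContinuousSMul ℝ (E i)]
    (hXne : ∀ i, (X i).Nonempty) (hXcomp : ∀ i, IsCompact (X i))
    (hconv : ∀ i, ∀ x ∈ univ.pi X, ConvexOn ℝ (X i) fun y ↦ f i (update x i y))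
    (hlsc : ∀ i, ∀ x ∈ univ.pi X, LowerSemicontinuousOn (fun y ↦ f i (update x i y)) (X i))
    (hequi : ∀ i, EquicontinuousOn (fun (y : X i) x ↦ f i (update x i y)) (univ.pi X)) :
    ∃ x ∈ univ.pi X, ∀ i, ∀ y ∈ X i, f i x ≤ f i (update x i y) := by
  cases nonempty_fintype ι
  refine exists_nash_of_lowerSemicontinuousOn_sum hXne hXcomp hconv
    (lowerSemicontinuousOn_sum fun i _ ↦
      lowerSemicontinuousOn_of_equicontinuousOn_update (hequi i) (hlsc i))
    fun i y hy ↦ ((hequi i).continuousOn ⟨y, hy⟩).upperSemicontinuousOn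

end Game

/-- Existence of a pure Nash equilibrium in an `n`-player game with convex
compact action sets and costs convex and l.s.c. in the own action, uniformly
equicontinuous in the opponents' actions. -/
theorem lsc_convex_game_PNE (n d : ℕ)
    (X : Fin n → Set (EuclideanSpace ℝ (Fin d)))
    (hXne : ∀ i, (X i).Nonempty) (hXconv : ∀ i, Convex ℝ (X i))
    (hXcomp : ∀ i, IsCompact (X i))
    (f : Fin n → (Fin n → EuclideanSpace ℝ (Fin d)) → ℝ)
    (hconv : ∀ i, ∀ x : Fin n → EuclideanSpace ℝ (Fin d), (∀ j, x j ∈ X j) →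
      ConvexOn ℝ (X i) (fun y => f i (Function.update x i y)))
    (hlsc : ∀ i, ∀ x : Fin n → EuclideanSpace ℝ (Fin d), (∀ j, x j ∈ X j) →
      LowerSemicontinuousOn (fun y => f i (Function.update x i y)) (X i))
    (hequi : ∀ i, ∀ ε > (0 : ℝ), ∃ δ > (0 : ℝ),
      ∀ x x' : Fin n → EuclideanSpace ℝ (Fin d),
        (∀ j, x j ∈ X j) → (∀ j, x' j ∈ X j) → x i = x' i →
        Real.sqrt (∑ j, ‖x j - x' j‖ ^ 2) ≤ δ → |f i x - f i x'| ≤ ε) :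
    ∃ x : Fin n → EuclideanSpace ℝ (Fin d), (∀ i, x i ∈ X i) ∧
      ∀ i, ∀ y ∈ X i, f i x ≤ f i (Function.update x i y) := by
  simp only [← Set.mem_univ_pi] at hconv hlsc ⊢
  exact lsc_convex_game_PNE_general hXne hXcomp hconv hlsc fun i ↦
    equicontinuousOn_update_of_forall_sqrt_le (hequi i)
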